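/- Let E be a real inner product space and let e_x : ℝ → E be differentiable on [0,T] with T ≥ 0, and let e_y, e_z : ℝ → F, G be functions into normed spaces. Assume constants K_yz, K_yx, L_y, ε ≥ 0 and μ ∈ ℝ satisfying: (i) for all t ∈ [0,T], ‖e_y(t)‖ ≤ K_yz‖e_z(t)‖ + K_yx‖e_x(t)‖; (ii) for all t ∈ [0,T], ⟪(d/dt)e_x(t), e_x(t)⟫ ≤ μ‖e_x(t)‖² + L_y‖e_y(t)‖·‖e_x(t)‖; (iii) for all t ∈ [0,T], ‖e_z(t)‖ ≤ ε; and (iv) e_x(0) = 0. Then ‖e_y(T)‖ ≤ K_yx·L_y·K_yz·Φ(T,α)·ε + K_yz·ε, where α = μ + L_y·K_yx. -/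

import Mathlib

open RealInnerProductSpace

/-- Horizon-dependent amplification factor: `Φ(T,α) = (e^{αT} − 1)/α` for `α ≠ 0`,
and `Φ(T,0) = T`. -/
noncomputable def Phi (T α : ℝ) : ℝ :=
  if α = 0 then T else (Real.exp (α * T) - 1) / α

/-!
The energy `‖e_x‖²` is differentiable even where `e_x` vanishes, whereas `‖e_x‖` need not be, and
the one-sided estimate says nothing about the growth of `‖e_x‖` there. So `‖e_x‖²` is compared
with the square of a Grönwall bound whose initial value and forcing are slightly too large: this
keeps the bound positive and makes the comparison of derivatives strict at any contact point.
Removing the perturbation gives Grönwall's inequality for the norm, and eliminating `e_y` from the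
dynamics puts the simulation error in its scope with rate `μ + L_y K_yx` and forcing `L_y K_yz ε`.
-/

open Set Filter Topology

theorem Phi_nonneg {T : ℝ} (hT : 0 ≤ T) (α : ℝ) : 0 ≤ Phi T α := by
  unfold Phi
  split_ifs with hα
  · exact hT
  · rcases lt_or_gt_of_ne hα with hneg | hpos
    · have hexp : Real.exp (α * T) ≤ 1 :=
        Real.exp_le_one_iff.mpr (mul_nonpos_of_nonpos_of_nonneg hneg.le hT)
      exact div_nonneg_of_nonpos (sub_nonpos.mpr hexp) hneg.le
    · have hexp : 1 ≤ Real.exp (α * T) := Real.one_le_exp (by positivity)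
      exact div_nonneg (sub_nonneg.mpr hexp) hpos.le

theorem gronwallBound_eq_mul_exp_add_mul_Phi (δ K c x : ℝ) :
    gronwallBound δ K c x = δ * Real.exp (K * x) + c * Phi x K := by
  unfold gronwallBound Phi
  split_ifs with hK
  · simp [hK]
  · ring

theorem gronwallBound_pos {δ c x : ℝ} (hδ : 0 < δ) (K : ℝ) (hc : 0 ≤ c) (hx : 0 ≤ x) :
    0 < gronwallBound δ K c x := by
  have hPhi := Phi_nonneg hx K
  rw [gronwallBound_eq_mul_exp_add_mul_Phi]
  positivity

section InnerDeriv

variable {E : Type*} [NormedAddCommGroup E] [InnerProductSpace ℝ E] {f f' : ℝ → E} {a b : ℝ}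

theorem image_norm_le_of_inner_deriv_right_lt_mul_deriv_boundary {B B' : ℝ → ℝ}
    (hf : ContinuousOn f (Icc a b))
    (hf' : ∀ x ∈ Ico a b, HasDerivWithinAt f (f' x) (Ici x) x)
    (ha : ‖f a‖ ≤ B a) (hB : ContinuousOn B (Icc a b))
    (hB' : ∀ x ∈ Ico a b, HasDerivWithinAt B (B' x) (Ici x) x)
    (hB_nonneg : ∀ x ∈ Icc a b, 0 ≤ B x)
    (bound : ∀ x ∈ Ico a b, ‖f x‖ = B x → ⟪f' x, f x⟫ < B x * B' x) :
    ∀ x ∈ Icc a b, ‖f x‖ ≤ B x := by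
  intro x hx
  refine (sq_le_sq₀ (norm_nonneg _) (hB_nonneg x hx)).mp ?_
  refine image_le_of_deriv_right_lt_deriv_boundary' (f := fun t => ‖f t‖ ^ 2)
    (B := fun t => B t ^ 2) (hf.norm.pow 2) (fun t ht => (hf' t ht).norm_sq)
    (by gcongr) (hB.pow 2) (fun t ht => (hB' t ht).fun_pow 2) ?_ hx
  intro t ht hsq
  have hnorm : ‖f t‖ = B t :=
    (pow_left_inj₀ (norm_nonneg _) (hB_nonneg t (Ico_subset_Icc_self ht)) two_ne_zero).mp hsq
  simpa [real_inner_comm, mul_assoc] using bound t ht hnorm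

theorem norm_le_gronwallBound_of_inner_deriv_right_le {δ K c : ℝ} (hc : 0 ≤ c)
    (hf : ContinuousOn f (Icc a b))
    (hf' : ∀ x ∈ Ico a b, HasDerivWithinAt f (f' x) (Ici x) x)
    (ha : ‖f a‖ ≤ δ)
    (bound : ∀ x ∈ Ico a b, ⟪f' x, f x⟫ ≤ K * ‖f x‖ ^ 2 + c * ‖f x‖) :
    ∀ x ∈ Icc a b, ‖f x‖ ≤ gronwallBound δ K c (x - a) := by
  intro x hx
  have hδ : 0 ≤ δ := (norm_nonneg _).trans ha
  have perturbed : ∀ s > 0, ‖f x‖ ≤ gronwallBound (δ + s) K (c + s) (x - a) := by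
    intro s hs
    have hpos : ∀ t, a ≤ t → 0 < gronwallBound (δ + s) K (c + s) (t - a) := fun t ht =>
      gronwallBound_pos (by positivity) K (by positivity) (sub_nonneg.mpr ht)
    have hderiv := fun t => hasDerivAt_gronwallBound_shift (δ + s) K (c + s) t a
    refine image_norm_le_of_inner_deriv_right_lt_mul_deriv_boundary hf hf'
      (by rw [sub_self, gronwallBound_x0]; linarith)
      (fun t _ => (hderiv t).continuousAt.continuousWithinAt)
      (fun t _ => (hderiv t).hasDerivWithinAt) (fun t ht => (hpos t ht.1).le) ?_ x hx
    intro t ht hcontact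
    rw [← hcontact]
    have hnorm : 0 < ‖f t‖ := hcontact ▸ hpos t ht.1
    calc ⟪f' t, f t⟫ ≤ K * ‖f t‖ ^ 2 + c * ‖f t‖ := bound t ht
      _ < K * ‖f t‖ ^ 2 + (c + s) * ‖f t‖ := by gcongr; linarith
      _ = ‖f t‖ * (K * ‖f t‖ + (c + s)) := by ring
  have hcont : Continuous fun s => gronwallBound (δ + s) K (c + s) (x - a) := by
    simp only [gronwallBound_eq_mul_exp_add_mul_Phi]
    fun_prop
  have hlim : Tendsto (fun s => gronwallBound (δ + s) K (c + s) (x - a)) (𝓝[>] 0)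
      (𝓝 (gronwallBound δ K c (x - a))) := by
    simpa only [add_zero] using (hcont.tendsto 0).mono_left nhdsWithin_le_nhds
  exact ge_of_tendsto hlim (eventually_nhdsWithin_of_forall perturbed)

end InnerDeriv

theorem finite_horizon_algebraic_bound_general
    {E F G : Type*} [NormedAddCommGroup E] [InnerProductSpace ℝ E]
    [SeminormedAddCommGroup F] [SeminormedAddCommGroup G]
    {T : ℝ} {e_x e_x' : ℝ → E} {e_y : ℝ → F} {e_z : ℝ → G} {K_yz K_yx L_y ε μ : ℝ}
    (hcont : ContinuousOn e_x (Icc 0 T))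
    (hderiv : ∀ t ∈ Ico 0 T, HasDerivWithinAt e_x (e_x' t) (Ici t) t)
    (hKyz : 0 ≤ K_yz) (hKyx : 0 ≤ K_yx) (hLy : 0 ≤ L_y)
    (h_alg : ∀ t ∈ Icc 0 T, ‖e_y t‖ ≤ K_yz * ‖e_z t‖ + K_yx * ‖e_x t‖)
    (h_dyn : ∀ t ∈ Ico 0 T,
      ⟪e_x' t, e_x t⟫ ≤ μ * ‖e_x t‖ ^ 2 + L_y * ‖e_y t‖ * ‖e_x t‖)
    (h_int : ∀ t ∈ Icc 0 T, ‖e_z t‖ ≤ ε) :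
    ∀ t ∈ Icc 0 T, ‖e_y t‖ ≤ K_yx * ‖e_x 0‖ * Real.exp ((μ + L_y * K_yx) * t) +
      K_yx * L_y * K_yz * Phi t (μ + L_y * K_yx) * ε + K_yz * ε := by
  intro t ht
  have hε : 0 ≤ ε := (norm_nonneg _).trans (h_int t ht)
  have hy : ∀ s ∈ Icc 0 T, ‖e_y s‖ ≤ K_yz * ε + K_yx * ‖e_x s‖ := fun s hs =>
    (h_alg s hs).trans (by gcongr; exact h_int s hs)
  have growth : ∀ s ∈ Ico 0 T, ⟪e_x' s, e_x s⟫ ≤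
      (μ + L_y * K_yx) * ‖e_x s‖ ^ 2 + L_y * K_yz * ε * ‖e_x s‖ := by
    intro s hs
    calc ⟪e_x' s, e_x s⟫ ≤ μ * ‖e_x s‖ ^ 2 + L_y * ‖e_y s‖ * ‖e_x s‖ := h_dyn s hs
      _ ≤ μ * ‖e_x s‖ ^ 2 + L_y * (K_yz * ε + K_yx * ‖e_x s‖) * ‖e_x s‖ := by
        gcongr
        exact hy s (Ico_subset_Icc_self hs)
      _ = _ := by ring
  have hx := norm_le_gronwallBound_of_inner_deriv_right_le (by positivity) hcont hderiv le_rfl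
    growth t ht
  rw [sub_zero, gronwallBound_eq_mul_exp_add_mul_Phi] at hx
  calc ‖e_y t‖ ≤ K_yz * ε + K_yx * ‖e_x t‖ := hy t ht
    _ ≤ K_yz * ε + K_yx * (‖e_x 0‖ * Real.exp ((μ + L_y * K_yx) * t) +
        L_y * K_yz * ε * Phi t (μ + L_y * K_yx)) := by gcongr
    _ = _ := by ring

/-- Finite-horizon in-simulator acceptance bound: algebraic-error part. -/
theorem finite_horizon_algebraic_bound
    {E F G : Type*} [NormedAddCommGroup E] [InnerProductSpace ℝ E]
    [NormedAddCommGroup F] [NormedSpace ℝ F]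
    [NormedAddCommGroup G] [NormedSpace ℝ G]
    (T : ℝ) (hT : 0 ≤ T)
    (e_x : ℝ → E) (e_y : ℝ → F) (e_z : ℝ → G)
    (hdiff : ∀ t ∈ Set.Icc (0 : ℝ) T, DifferentiableAt ℝ e_x t)
    (K_yz K_yx L_y ε μ : ℝ)
    (hKyz : 0 ≤ K_yz) (hKyx : 0 ≤ K_yx) (hLy : 0 ≤ L_y) (hε : 0 ≤ ε)
    (h1 : ∀ t ∈ Set.Icc (0 : ℝ) T, ‖e_y t‖ ≤ K_yz * ‖e_z t‖ + K_yx * ‖e_x t‖)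
    (h2 : ∀ t ∈ Set.Icc (0 : ℝ) T,
      ⟪deriv e_x t, e_x t⟫ ≤ μ * ‖e_x t‖ ^ 2 + L_y * ‖e_y t‖ * ‖e_x t‖)
    (h3 : ∀ t ∈ Set.Icc (0 : ℝ) T, ‖e_z t‖ ≤ ε)
    (h4 : e_x 0 = 0) :
    ‖e_y T‖ ≤ K_yx * L_y * K_yz * Phi T (μ + L_y * K_yx) * ε + K_yz * ε := by
  simpa [h4] using finite_horizon_algebraic_bound_general
    (fun t ht => (hdiff t ht).continuousAt.continuousWithinAt)
    (fun t ht => (hdiff t (Ico_subset_Icc_self ht)).hasDerivAt.hasDerivWithinAt)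
    hKyz hKyx hLy h1 (fun t ht => h2 t (Ico_subset_Icc_self ht)) h3 T (right_mem_Icc.mpr hT)
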